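/- arXiv:2009.05040 — 2 statements merged into one kernel-verified Lean document; each statement's English description precedes it below -/
import Mathlib

section
/- Let G be a simple graph on n vertices. Suppose α and α' are double-flip equivalent acyclic orientations of G, u is a source of α, and u' is a source of α'. Let ᾱ be obtained from α by reversing all edges incident to u (flipping the source u into a sink), and let ᾱ' be obtained from α' by reversing all edges incident to u'. Then ᾱ and ᾱ' are double-flip equivalent. In particular, the map Φ on double-flip equivalence classes of acyclic orientations of G sending the class of α to the class of ᾱ is well-defined. -/
/-- `o` is an orientation of the simple graph `G`: it directs each edge of `G` in
exactly one direction, and directs nothing else. -/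
def IsOrientation {V : Type*} (G : SimpleGraph V) (o : V → V → Prop) : Prop :=
  (∀ a b, o a b → G.Adj a b) ∧ ∀ a b, G.Adj a b → (o a b ↔ ¬ o b a)

/-- `DoubleFlip G o o'` : the orientation `o'` is obtained from `o` by a double flip,
i.e., there are a source `u` of `o` (a vertex of in-degree `0`) and a sink `v` of `o`
(a vertex of out-degree `0`), not adjacent in `G`, such that `o'` reverses exactly the
edges of `o` incident to `u` or `v`. -/
def DoubleFlip {V : Type*} (G : SimpleGraph V) (o o' : V → V → Prop) : Prop :=
  ∃ u v : V, u ≠ v ∧ ¬ G.Adj u v ∧ (∀ w, ¬ o w u) ∧ (∀ w, ¬ o v w) ∧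
    ∀ a b, o' a b ↔
      (((a = u ∨ b = u ∨ a = v ∨ b = v) ∧ o b a) ∨
        (¬ (a = u ∨ b = u ∨ a = v ∨ b = v) ∧ o a b))

/-- `SingleFlip o o'` : the orientation `o'` is obtained from `o` by flipping a single
source or sink `u`, i.e., reversing exactly the edges of `o` incident to `u`. -/
def SingleFlip {V : Type*} (o o' : V → V → Prop) : Prop :=
  ∃ u : V, ((∀ w, ¬ o w u) ∨ (∀ w, ¬ o u w)) ∧
    ∀ a b, o' a b ↔
      (((a = u ∨ b = u) ∧ o b a) ∨ (¬ (a = u ∨ b = u) ∧ o a b))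

/-- Reverse all edges incident to `u`. -/
def flipAt {V : Type*} (o : V → V → Prop) (u : V) : V → V → Prop :=
  fun a b => ((a = u ∨ b = u) ∧ o b a) ∨ (¬ (a = u ∨ b = u) ∧ o a b)

theorem DoubleFlip.isOrientation {V : Type*} {G : SimpleGraph V} {o o' : V → V → Prop}
    (ho : IsOrientation G o) (h : DoubleFlip G o o') : IsOrientation G o' := by
  obtain ⟨u, v, -, -, -, -, h⟩ := h
  obtain ⟨h1, h2⟩ := ho
  refine ⟨fun a b hab => ?_, fun a b hab => ?_⟩
  · rcases (h a b).1 hab with ⟨-, k⟩ | ⟨-, k⟩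
    · exact (h1 _ _ k).symm
    · exact h1 _ _ k
  · rw [h a b, h b a]
    have := h2 a b hab
    tauto

/-- Flipping two different sources of one orientation gives equivalent orientations. -/
theorem flipAt_sources {V : Type*} {G : SimpleGraph V} {o : V → V → Prop}
    (ho : IsOrientation G o) {u v : V} (hu : ∀ w, ¬ o w u) (hv : ∀ w, ¬ o w v) :
    Relation.ReflTransGen (DoubleFlip G) (flipAt o u) (flipAt o v) := by
  by_cases huv : u = v
  · rw [huv]
  apply Relation.ReflTransGen.single
  refine ⟨v, u, fun h => huv h.symm, fun h => ?_, fun w hw => ?_, fun w hw => ?_, fun a b => ?_⟩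
  · exact hu v ((ho.2 v u h).2 (hv u))
  · unfold flipAt at hw
    have := hu v
    have := hv w
    grind
  · unfold flipAt at hw
    have := hu w
    grind
  · unfold flipAt
    have := hu v
    have := hv u
    grind

theorem flipAt_equiv {V : Type*} {G : SimpleGraph V} {o o' : V → V → Prop}
    (ho : IsOrientation G o) (h : Relation.ReflTransGen (DoubleFlip G) o o')
    {u : V} (hu : ∀ w, ¬ o w u) :
    IsOrientation G o' ∧ ∀ u', (∀ w, ¬ o' w u') →
      Relation.ReflTransGen (DoubleFlip G) (flipAt o u) (flipAt o' u') := by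
  induction h with
  | refl => exact ⟨ho, fun u' hu' => flipAt_sources ho hu hu'⟩
  | @tail q r _ hqr ih =>
    obtain ⟨hq, ih⟩ := ih
    have hr := hqr.isOrientation hq
    refine ⟨hr, fun u' hu' => ?_⟩
    obtain ⟨x, y, hxy, hadj, hx, hy, hflip⟩ := hqr
    have hys : ∀ w, ¬ r w y := by
      intro w hw
      have := hy w
      have := hflip w y
      grind
    have heq : flipAt q x = flipAt r y := by
      funext a b
      apply propext
      have h1 := hflip a b
      have h2 := hflip b a
      have h3 := hx y
      have h4 := hy x
      have h5 : ¬ q x y := fun h => hadj (hq.1 _ _ h)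
      unfold flipAt
      grind
    have h1 := ih x hx
    rw [heq] at h1
    exact h1.trans (flipAt_sources hr hys hu')

/-- Defant–Kravitz, Corollary 4.4: if `o ≈ o'` are double-flip equivalent acyclic
orientations of a graph `G` on finitely many vertices, `u` is a source of `o`, `u'`
is a source of `o'`, and `p` (resp. `p'`) is obtained from `o` (resp. `o'`) by
flipping the source `u` (resp. `u'`) into a sink, then `p ≈ p'`.  In particular,
flipping a source into a sink induces a well-defined map `Φ` on double-flip
equivalence classes of acyclic orientations of `G`. -/
theorem stmt10 {V : Type*} [Fintype V] (G : SimpleGraph V)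
    (o o' : V → V → Prop)
    (ho : IsOrientation G o) (hoa : ∀ v, ¬ Relation.TransGen o v v)
    (ho' : IsOrientation G o') (ho'a : ∀ v, ¬ Relation.TransGen o' v v)
    (hequiv : Relation.ReflTransGen (DoubleFlip G) o o')
    (u u' : V) (hu : ∀ w, ¬ o w u) (hu' : ∀ w, ¬ o' w u')
    (p p' : V → V → Prop)
    (hp : ∀ a b, p a b ↔ (((a = u ∨ b = u) ∧ o b a) ∨ (¬ (a = u ∨ b = u) ∧ o a b)))
    (hp' : ∀ a b, p' a b ↔
      (((a = u' ∨ b = u') ∧ o' b a) ∨ (¬ (a = u' ∨ b = u') ∧ o' a b))) :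
    Relation.ReflTransGen (DoubleFlip G) p p' := by
  have e : p = flipAt o u := funext fun a => funext fun b => propext (hp a b)
  have e' : p' = flipAt o' u' := funext fun a => funext fun b => propext (hp' a b)
  rw [e, e']
  exact (flipAt_equiv ho hequiv hu).2 u' hu'
end

section
/- Let G be a connected simple graph on n vertices. For every acyclic orientation α of G, the toric equivalence class of α (its equivalence class under single flips of sources and sinks) is the disjoint union of exactly n double-flip equivalence classes; equivalently, the number of double-flip equivalence classes contained in {β : β torically equivalent to α} is exactly n. -/
/-- Admissible flip-count functions relative to `o`. -/
def Adm {V : Type*} (o : V → V → Prop) (k : V → ℤ) : Prop :=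
  ∀ a b, o a b → k b ≤ k a ∧ k a ≤ k b + 1

/-- The orientation obtained from `o` by the flip counts `k`. -/
def Ori {V : Type*} (o : V → V → Prop) (k : V → ℤ) (a b : V) : Prop :=
  (o a b ∧ k a = k b) ∨ (o b a ∧ k b = k a + 1)

lemma exists_min_of_acyclic {V : Type*} [Finite V] (R : V → V → Prop)
    (h : ∀ v, ¬ Relation.TransGen R v v) (A : Set V) (hA : A.Nonempty) :
    ∃ u ∈ A, ∀ w ∈ A, ¬ R w u := by
  have : Std.Irrefl (Relation.TransGen R) := ⟨h⟩
  have wf : WellFounded (Relation.TransGen R) := Finite.wellFounded_of_trans_of_irrefl _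
  obtain ⟨u, hu, hm⟩ := wf.has_min A hA
  exact ⟨u, hu, fun w hw hr => hm w hw (.single hr)⟩

lemma exists_max_of_acyclic {V : Type*} [Finite V] (R : V → V → Prop)
    (h : ∀ v, ¬ Relation.TransGen R v v) (A : Set V) (hA : A.Nonempty) :
    ∃ u ∈ A, ∀ w ∈ A, ¬ R u w := by
  refine exists_min_of_acyclic (Function.swap R) (fun v hv => h v ?_) A hA
  rwa [Relation.transGen_swap] at hv

lemma ori_acyclic {V : Type*} (o : V → V → Prop) (hacyc : ∀ v, ¬ Relation.TransGen o v v)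
    (k : V → ℤ) (v : V) : ¬ Relation.TransGen (Ori o k) v v := by
  have key : ∀ a b, Relation.TransGen (Ori o k) a b →
      k a < k b ∨ (k a = k b ∧ Relation.TransGen o a b) := by
    intro a b hab
    induction hab with
    | single h =>
      rcases h with ⟨h, e⟩ | ⟨h, e⟩
      · exact Or.inr ⟨e, .single h⟩
      · left; omega
    | tail _ h ih =>
      rcases h with ⟨h, e⟩ | ⟨h, e⟩
      · rcases ih with ih | ⟨ih, t⟩
        · left; omega
        · exact Or.inr ⟨ih.trans e, t.tail h⟩
      · left; omega
  intro hv
  rcases key v v hv with h | ⟨_, h⟩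
  · omega
  · exact hacyc v h

lemma ori_zero {V : Type*} (o : V → V → Prop) : Ori o 0 = o := by
  funext a b
  simp [Ori]

section
open Classical

lemma source_flip {V : Type*} (o : V → V → Prop) (h1 : ∀ a b, o a b → ¬ o b a)
    (k : V → ℤ) (hk : Adm o k) (u : V) (hu : ∀ w, ¬ Ori o k w u) :
    Adm o (k + Pi.single u 1) ∧ ∀ a b, Ori o (k + Pi.single u 1) a b ↔
      (((a = u ∨ b = u) ∧ Ori o k b a) ∨ (¬ (a = u ∨ b = u) ∧ Ori o k a b)) := by
  have hirr : ∀ a, ¬ o a a := fun a h => h1 a a h h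
  unfold Adm Ori at *
  simp only [Pi.add_apply, Pi.single_apply]
  constructor
  · intro a b hab
    have := hk a b hab
    have := hu a
    have := hu b
    have := hirr a
    grind
  · intro a b
    have := hk a b
    have := hk b a
    have := hu a
    have := hu b
    have := hirr a
    have := h1 a b
    grind

lemma sink_flip {V : Type*} (o : V → V → Prop) (h1 : ∀ a b, o a b → ¬ o b a)
    (k : V → ℤ) (hk : Adm o k) (u : V) (hu : ∀ w, ¬ Ori o k u w) :
    Adm o (k - Pi.single u 1) ∧ ∀ a b, Ori o (k - Pi.single u 1) a b ↔
      (((a = u ∨ b = u) ∧ Ori o k b a) ∨ (¬ (a = u ∨ b = u) ∧ Ori o k a b)) := by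
  have hirr : ∀ a, ¬ o a a := fun a h => h1 a a h h
  unfold Adm Ori at *
  simp only [Pi.sub_apply, Pi.single_apply]
  constructor
  · intro a b hab
    have := hk a b hab
    have := hu a
    have := hu b
    have := hirr a
    grind
  · intro a b
    have := hk a b
    have := hk b a
    have := hu a
    have := hu b
    have := hirr a
    have := h1 a b
    grind

lemma double_flip {V : Type*} (o : V → V → Prop) (h1 : ∀ a b, o a b → ¬ o b a)
    (k : V → ℤ) (hk : Adm o k) (u v : V) (huv : u ≠ v) (hn : ¬ o u v) (hn' : ¬ o v u)
    (hu : ∀ w, ¬ Ori o k w u) (hv : ∀ w, ¬ Ori o k v w) :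
    Adm o (k + Pi.single u 1 - Pi.single v 1) ∧
    ∀ a b, Ori o (k + Pi.single u 1 - Pi.single v 1) a b ↔
      (((a = u ∨ b = u ∨ a = v ∨ b = v) ∧ Ori o k b a) ∨
        (¬ (a = u ∨ b = u ∨ a = v ∨ b = v) ∧ Ori o k a b)) := by
  obtain ⟨ha, hb⟩ := source_flip o h1 k hk u hu
  have nuv : ¬ Ori o k u v := by unfold Ori; tauto
  have nvu : ¬ Ori o k v u := by unfold Ori; tauto
  obtain ⟨hc, hd⟩ := sink_flip o h1 _ ha v (by
    intro w
    rw [hb]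
    have := hv w
    grind)
  refine ⟨hc, fun a b => ?_⟩
  rw [hd, hb, hb]
  grind

lemma reach_single {V : Type*} (o : V → V → Prop) (h1 : ∀ a b, o a b → ¬ o b a)
    (p : V → V → Prop) (h : Relation.ReflTransGen SingleFlip o p) :
    ∃ k, Adm o k ∧ p = Ori o k := by
  induction h with
  | refl => exact ⟨0, fun a b _ => by simp, (ori_zero o).symm⟩
  | tail _ h ih =>
    obtain ⟨k, hk, rfl⟩ := ih
    obtain ⟨u, hu, hq⟩ := h
    rcases hu with hu | hu
    · obtain ⟨ha, hb⟩ := source_flip o h1 k hk u hu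
      exact ⟨_, ha, by funext a b; exact propext ((hq a b).trans (hb a b).symm)⟩
    · obtain ⟨ha, hb⟩ := sink_flip o h1 k hk u hu
      exact ⟨_, ha, by funext a b; exact propext ((hq a b).trans (hb a b).symm)⟩

lemma reach_double {V : Type*} [Fintype V] (G : SimpleGraph V) (o : V → V → Prop)
    (hG : ∀ a b, o a b → G.Adj a b) (h1 : ∀ a b, o a b → ¬ o b a)
    (k : V → ℤ) (hk : Adm o k)
    (p : V → V → Prop) (h : Relation.ReflTransGen (DoubleFlip G) (Ori o k) p) :
    ∃ k', Adm o k' ∧ p = Ori o k' ∧ ∑ v, k' v = ∑ v, k v := by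
  induction h with
  | refl => exact ⟨k, hk, rfl, rfl⟩
  | tail _ h ih =>
    obtain ⟨l, hl, rfl, hs⟩ := ih
    obtain ⟨u, v, huv, hadj, hu, hv, hq⟩ := h
    obtain ⟨ha, hb⟩ := double_flip o h1 l hl u v huv (fun h => hadj (hG _ _ h))
      (fun h => hadj (hG _ _ h).symm) hu hv
    refine ⟨_, ha, by funext a b; exact propext ((hq a b).trans (hb a b).symm), ?_⟩
    simp [Finset.sum_add_distrib, hs]

lemma ori_eq {V : Type*} (G : SimpleGraph V) (hc : G.Connected) (o : V → V → Prop)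
    (ho : ∀ a b, G.Adj a b → (o a b ∨ o b a)) (h1 : ∀ a b, o a b → ¬ o b a)
    (k k' : V → ℤ) (hk : Adm o k) (hk' : Adm o k') (h : Ori o k = Ori o k') :
    ∃ c, ∀ v, k' v = k v + c := by
  have step : ∀ a b, o a b → k' a - k a = k' b - k b := by
    intro a b hab
    have e : Ori o k a b ↔ Ori o k' a b := by rw [h]
    have := hk a b hab
    have := hk' a b hab
    have := h1 a b hab
    unfold Ori at e
    grind
  obtain ⟨r⟩ := hc.nonempty
  refine ⟨k' r - k r, fun v => ?_⟩
  obtain ⟨w⟩ := hc.preconnected v r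
  suffices k' v - k v = k' r - k r by omega
  induction w with
  | nil => rfl
  | cons hadj _ ih =>
    rw [← ih]
    rcases ho _ _ hadj with h | h
    · exact step _ _ h
    · exact (step _ _ h).symm

lemma connect {V : Type*} [Fintype V] (G : SimpleGraph V) (o : V → V → Prop)
    (ho : ∀ a b, G.Adj a b → (o a b ∨ o b a)) (h1 : ∀ a b, o a b → ¬ o b a)
    (hacyc : ∀ v, ¬ Relation.TransGen o v v) (N : ℕ) :
    ∀ (k k' : V → ℤ), Adm o k → Adm o k' → ∑ v, k v = ∑ v, k' v →
    ∑ v, (k' v - k v).natAbs ≤ N →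
    Relation.ReflTransGen (DoubleFlip G) (Ori o k) (Ori o k') := by
  induction N with
  | zero =>
    intro k k' hk hk' hs hN
    have : k = k' := by
      funext v
      have h0 := Finset.sum_eq_zero_iff.1 (Nat.le_zero.1 hN) v (Finset.mem_univ v)
      omega
    rw [this]
  | succ N ih =>
    intro k k' hk hk' hs hN
    by_cases hkk : k = k'
    · rw [hkk]
    have hne : ∃ x, k x ≠ k' x := by
      by_contra! hh
      exact hkk (funext hh)
    obtain ⟨x0, hx0⟩ := hne
    have : Nonempty V := ⟨x0⟩
    have hs0 : ∑ v, (k' v - k v) = 0 := by rw [Finset.sum_sub_distrib, hs, sub_self]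
    obtain ⟨x, hx⟩ := Finite.exists_max (fun v => k' v - k v)
    obtain ⟨y, hy⟩ := Finite.exists_min (fun v => k' v - k v)
    have hxpos : 0 < k' x - k x := by
      by_contra! hh
      have := (Finset.sum_eq_zero_iff_of_nonpos (fun i _ => (hx i).trans hh)).1 hs0 x0
        (Finset.mem_univ _)
      omega
    have hyneg : k' y - k y < 0 := by
      by_contra! hh
      have := (Finset.sum_eq_zero_iff_of_nonneg (fun i _ => hh.trans (hy i))).1 hs0 x0
        (Finset.mem_univ _)
      omega
    obtain ⟨u, hu, humin⟩ := exists_min_of_acyclic (Ori o k) (ori_acyclic o hacyc k)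
      {z | k' z - k z = k' x - k x} ⟨x, rfl⟩
    obtain ⟨v, hv, hvmax⟩ := exists_max_of_acyclic (Ori o k) (ori_acyclic o hacyc k)
      {z | k' z - k z = k' y - k y} ⟨y, rfl⟩
    simp only [Set.mem_ofPred_eq] at hu hv humin hvmax
    have husrc : ∀ w, ¬ Ori o k w u := by
      intro w hw
      have hne : ¬ (k' w - k w = k' x - k x) := fun h => humin w h hw
      have hle := hx w
      rcases hw with ⟨h, e⟩ | ⟨h, e⟩
      · have := hk' _ _ h
        omega
      · have := hk' _ _ h
        omega
    have hvsnk : ∀ w, ¬ Ori o k v w := by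
      intro w hw
      have hne : ¬ (k' w - k w = k' y - k y) := fun h => hvmax w h hw
      have hle := hy w
      rcases hw with ⟨h, e⟩ | ⟨h, e⟩
      · have := hk' _ _ h
        omega
      · have := hk' _ _ h
        omega
    have huv : u ≠ v := by
      rintro rfl
      omega
    have n1 : ¬ o u v := by
      intro h
      have := hk' _ _ h
      have := hk _ _ h
      omega
    have n2 : ¬ o v u := by
      intro h
      have := hk' _ _ h
      have := hk _ _ h
      omega
    obtain ⟨ha, hb⟩ := double_flip o h1 k hk u v huv n1 n2 husrc hvsnk
    refine Relation.ReflTransGen.head (b := Ori o (k + Pi.single u 1 - Pi.single v 1))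
      ⟨u, v, huv, fun h => (ho _ _ h).elim n1 n2, husrc, hvsnk, hb⟩ ?_
    refine ih _ _ ha hk' (by simp [Finset.sum_add_distrib, hs]) ?_
    refine Nat.le_of_lt_succ (lt_of_lt_of_le ?_ hN)
    refine Finset.sum_lt_sum (fun i _ => ?_) ⟨u, Finset.mem_univ _, ?_⟩
    · simp only [Pi.add_apply, Pi.sub_apply, Pi.single_apply]
      grind
    · simp only [Pi.add_apply, Pi.sub_apply, Pi.single_apply]
      grind

lemma exists_sum {V : Type*} [Fintype V] [Nonempty V] (o : V → V → Prop)
    (h1 : ∀ a b, o a b → ¬ o b a)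
    (hacyc : ∀ v, ¬ Relation.TransGen o v v) (j : ℕ) :
    ∃ k, Adm o k ∧ Relation.ReflTransGen SingleFlip o (Ori o k) ∧ ∑ v, k v = j := by
  induction j with
  | zero =>
    refine ⟨0, fun a b _ => by simp, ?_, by simp⟩
    rw [ori_zero]
  | succ j ih =>
    obtain ⟨k, hk, hr, hs⟩ := ih
    obtain ⟨u, -, hu⟩ := exists_min_of_acyclic (Ori o k) (ori_acyclic o hacyc k)
      Set.univ Set.univ_nonempty
    have hu' : ∀ w, ¬ Ori o k w u := fun w => hu w trivial
    obtain ⟨ha, hb⟩ := source_flip o h1 k hk u hu'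
    exact ⟨_, ha, hr.tail ⟨u, Or.inl hu', hb⟩, by simp [Finset.sum_add_distrib, hs]⟩

end

/-- Defant–Kravitz, Corollary 4.7: for a connected graph `G` on `n` vertices and an
acyclic orientation `o` of `G`, the toric equivalence class of `o` (its class under
single flips) is the disjoint union of exactly `n` double-flip equivalence classes:
the number of distinct double-flip classes of orientations torically equivalent to
`o` is `n = |V(G)|`. -/
theorem stmt12 {V : Type*} [Fintype V] (G : SimpleGraph V) (hG : G.Connected)
    (o : V → V → Prop) (ho : IsOrientation G o)
    (hacyc : ∀ v, ¬ Relation.TransGen o v v) :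
    Set.ncard {C : Set (V → V → Prop) |
        ∃ p, Relation.ReflTransGen SingleFlip o p ∧
          C = {q | Relation.ReflTransGen (DoubleFlip G) p q}} = Fintype.card V := by
  have h1 : ∀ a b, o a b → ¬ o b a := fun a b h => (ho.2 a b (ho.1 a b h)).1 h
  have h2 : ∀ a b, G.Adj a b → (o a b ∨ o b a) := by
    intro a b h
    have := ho.2 a b h
    tauto
  have := hG.nonempty
  have hn : 0 < Fintype.card V := Fintype.card_pos
  choose K hK hR hS using fun j : ℕ => exists_sum o h1 hacyc j
  have conn : ∀ k k', Adm o k → Adm o k' → ∑ v, k v = ∑ v, k' v →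
      Relation.ReflTransGen (DoubleFlip G) (Ori o k) (Ori o k') :=
    fun k k' a b c => connect G o h2 h1 hacyc _ k k' a b c le_rfl
  let F : Fin (Fintype.card V) → Set (V → V → Prop) := fun j =>
    {q | Relation.ReflTransGen (DoubleFlip G) (Ori o (K j)) q}
  have hF : Function.Injective F := by
    intro i j hij
    have hm : Ori o (K j) ∈ F i := by
      rw [hij]
      exact Relation.ReflTransGen.refl
    obtain ⟨k', hk', he, hs⟩ := reach_double G o ho.1 h1 _ (hK i) _ hm
    obtain ⟨c, hc⟩ := ori_eq G hG o h2 h1 _ _ (hK j) hk' he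
    have hsum : ((i : ℕ) : ℤ) = (j : ℕ) + (Fintype.card V : ℤ) * c := by
      rw [← hS i, ← hs, ← hS j, Finset.sum_congr rfl (fun v _ => hc v)]
      simp [Finset.sum_add_distrib]
    have hi := i.isLt
    have hj := j.isLt
    have : ((i : ℕ) : ℤ) % (Fintype.card V : ℤ) = ((j : ℕ) : ℤ) % (Fintype.card V : ℤ) := by
      rw [hsum, Int.add_mul_emod_self_left]
    rw [Int.emod_eq_of_lt (by omega) (by omega), Int.emod_eq_of_lt (by omega) (by omega)] at this
    exact Fin.ext (by omega)
  have hset : {C : Set (V → V → Prop) | ∃ p, Relation.ReflTransGen SingleFlip o p ∧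
      C = {q | Relation.ReflTransGen (DoubleFlip G) p q}} = Set.range F := by
    ext C
    constructor
    · rintro ⟨p, hp, rfl⟩
      obtain ⟨k, hk, rfl⟩ := reach_single o h1 p hp
      have hn' : (0 : ℤ) < Fintype.card V := by exact_mod_cast hn
      obtain ⟨j, hj⟩ := Int.eq_ofNat_of_zero_le
        (Int.emod_nonneg (∑ v, k v) hn'.ne')
      have hlt := Int.emod_lt_of_pos (∑ v, k v) hn'
      set c := (∑ v, k v) / (Fintype.card V : ℤ) with hc
      have hdm := Int.emod_add_mul_ediv (∑ v, k v) (Fintype.card V : ℤ)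
      have hk2 : Adm o (fun v => k v - c) := by
        intro a b hab
        have := hk a b hab
        constructor <;> dsimp only <;> omega
      have hO : Ori o k = Ori o (fun v => k v - c) := by
        funext a b
        unfold Ori
        have e1 : k a = k b ↔ k a - c = k b - c := by omega
        have e2 : k b = k a + 1 ↔ k b - c = k a - c + 1 := by omega
        rw [e1, e2]
      have hs : ∑ v, K j v = ∑ v, (k v - c) := by
        rw [hS j, Finset.sum_sub_distrib]
        simp only [Finset.sum_const, Finset.card_univ, nsmul_eq_mul]
        rw [← hj]
        linarith
      refine ⟨⟨j, by omega⟩, ?_⟩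
      rw [hO]
      ext q
      exact ⟨fun h => (conn _ _ hk2 (hK j) hs.symm).trans h,
        fun h => (conn _ _ (hK j) hk2 hs).trans h⟩
    · rintro ⟨j, rfl⟩
      exact ⟨_, hR j, rfl⟩
  rw [hset, ← Set.image_univ, Set.ncard_image_of_injective _ hF, Set.ncard_univ]
  simp
end
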